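/- arXiv:2605.11607 — 4 statements merged into one kernel-verified Lean document; each statement's English description precedes it below -/
import Mathlib

section
/- Let Σ be the PPLS joint covariance matrix. Then det Σ = (σ_e²)^{p−r} · (σ_f²)^{q−r} · ∏_{i=1}^r D_i, where D_i = (σ_f² + σ_h²)(θ_i² + σ_e²) + b_i² θ_i² σ_e². -/
open Matrix

section OrthonormalColumns

variable {K m n : Type*} [Field K] [Fintype m] [DecidableEq m] [Fintype n] [DecidableEq n]

/-- The determinant of a scalar matrix perturbed along orthonormal columns. -/
lemma det_mul_diagonal_mul_transpose_add_smul_one {W : Matrix m n K} (hW : Wᵀ * W = 1)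
    (d : n → K) {s : K} (hs : s ≠ 0) (hmn : Fintype.card n ≤ Fintype.card m) :
    (W * diagonal d * Wᵀ + s • (1 : Matrix m m K)).det
      = s ^ (Fintype.card m - Fintype.card n) * ∏ i, (d i + s) := by
  have hfactor : W * diagonal d * Wᵀ + s • (1 : Matrix m m K)
      = s • (1 + W * (s⁻¹ • (diagonal d * Wᵀ))) := by
    rw [smul_add, Matrix.mul_smul, smul_smul, mul_inv_cancel₀ hs, one_smul, add_comm,
      Matrix.mul_assoc]
  have hdiag : (1 : Matrix n n K) + s⁻¹ • (diagonal d * Wᵀ) * W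
      = diagonal fun i => s⁻¹ * (d i + s) := by
    rw [Matrix.smul_mul, Matrix.mul_assoc, hW, Matrix.mul_one, ← diagonal_one, ← diagonal_smul,
      diagonal_add]
    congr 1
    funext i
    simp only [Pi.smul_apply, smul_eq_mul]
    field_simp
    ring
  rw [hfactor, det_smul, det_one_add_mul_comm, hdiag, det_diagonal, Finset.prod_mul_distrib,
    Finset.prod_const, Finset.card_univ, ← mul_assoc, pow_sub₀ _ hs hmn, inv_pow]

/-- The inverse of a scalar matrix perturbed along orthonormal columns acts on those columns
diagonally. -/
lemma transpose_mul_inv_mul_of_orthonormal {W : Matrix m n K} (hW : Wᵀ * W = 1)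
    (d : n → K) {s : K} (hd : ∀ i, d i + s ≠ 0)
    (hA : IsUnit (W * diagonal d * Wᵀ + s • (1 : Matrix m m K)).det) :
    Wᵀ * (W * diagonal d * Wᵀ + s • (1 : Matrix m m K))⁻¹ * W
      = diagonal fun i => (d i + s)⁻¹ := by
  set A := W * diagonal d * Wᵀ + s • (1 : Matrix m m K) with hAdef
  have hAW : A * W = W * diagonal fun i => d i + s := by
    rw [hAdef, Matrix.add_mul, Matrix.mul_assoc, hW, Matrix.mul_one, Matrix.smul_mul,
      Matrix.one_mul, ← diagonal_add, Matrix.mul_add, ← smul_one_eq_diagonal, Matrix.mul_smul,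
      Matrix.mul_one]
  have hWinv : W = A * (W * diagonal fun i => (d i + s)⁻¹) := by
    rw [← Matrix.mul_assoc, hAW, Matrix.mul_assoc, diagonal_mul_diagonal]
    simp [hd]
  have hcancel : A⁻¹ * W = W * diagonal fun i => (d i + s)⁻¹ := by
    conv_lhs => rw [hWinv]
    exact nonsing_inv_mul_cancel_left A _ hA
  rw [Matrix.mul_assoc, hcancel, ← Matrix.mul_assoc, hW, Matrix.one_mul]

end OrthonormalColumns

/-- determinant of the PPLS joint covariance matrix:
`det Σ = (σ_e²)^{p−r} · (σ_f²)^{q−r} · ∏ᵢ Dᵢ` with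
`Dᵢ = (σ_f² + σ_h²)(θᵢ² + σ_e²) + bᵢ² θᵢ² σ_e²`. -/
theorem stmt4 (p q r : ℕ) (hr : 1 ≤ r) (hrp : r < p) (hrq : r < q)
    (σe2 σf2 σh2 : ℝ) (hσe2 : 0 < σe2) (hσf2 : 0 < σf2) (hσh2 : 0 < σh2)
    (θ2 b : Fin r → ℝ) (hθ2 : ∀ i, 0 < θ2 i) (hb : ∀ i, 0 < b i)
    (W : Matrix (Fin p) (Fin r) ℝ) (C : Matrix (Fin q) (Fin r) ℝ)
    (hW : Wᵀ * W = 1) (hC : Cᵀ * C = 1) :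
    (Matrix.fromBlocks
        (W * Matrix.diagonal θ2 * Wᵀ + σe2 • (1 : Matrix (Fin p) (Fin p) ℝ))
        (W * Matrix.diagonal θ2 * Matrix.diagonal b * Cᵀ)
        (C * Matrix.diagonal b * Matrix.diagonal θ2 * Wᵀ)
        (C * (Matrix.diagonal (fun i => b i ^ 2) * Matrix.diagonal θ2
              + σh2 • (1 : Matrix (Fin r) (Fin r) ℝ)) * Cᵀ
          + σf2 • (1 : Matrix (Fin q) (Fin q) ℝ))).det
      = σe2 ^ (p - r) * σf2 ^ (q - r) *
          ∏ i : Fin r, ((σf2 + σh2) * (θ2 i + σe2) + b i ^ 2 * θ2 i * σe2) := by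
  have hpos : ∀ i, 0 < θ2 i + σe2 := fun i => add_pos (hθ2 i) hσe2
  have hdetA := det_mul_diagonal_mul_transpose_add_smul_one hW θ2 hσe2.ne'
    (by simpa using hrp.le)
  have hunit : IsUnit (W * diagonal θ2 * Wᵀ + σe2 • (1 : Matrix (Fin p) (Fin p) ℝ)).det := by
    rw [hdetA, isUnit_iff_ne_zero]
    exact mul_ne_zero (pow_ne_zero _ hσe2.ne') (Finset.prod_ne_zero_iff.2 fun i _ => (hpos i).ne')
  have hinner := transpose_mul_inv_mul_of_orthonormal hW θ2 (fun i => (hpos i).ne') hunit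
  set A := W * diagonal θ2 * Wᵀ + σe2 • (1 : Matrix (Fin p) (Fin p) ℝ)
  let e : Fin r → ℝ := fun i => b i ^ 2 * θ2 i + σh2 - (b i * θ2 i) ^ 2 * (θ2 i + σe2)⁻¹
  have hcross : C * diagonal b * diagonal θ2 * Wᵀ * A⁻¹ * (W * diagonal θ2 * diagonal b * Cᵀ)
      = C * diagonal (fun i => (b i * θ2 i) ^ 2 * (θ2 i + σe2)⁻¹) * Cᵀ := by
    calc _ = C * (diagonal b * diagonal θ2 * (Wᵀ * A⁻¹ * W) * diagonal θ2 * diagonal b) * Cᵀ := by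
          simp only [Matrix.mul_assoc]
      _ = _ := by
          rw [hinner]
          simp only [diagonal_mul_diagonal]
          congr 3
          funext i
          ring
  have hschur : C * (diagonal (fun i => b i ^ 2) * diagonal θ2
        + σh2 • (1 : Matrix (Fin r) (Fin r) ℝ)) * Cᵀ + σf2 • (1 : Matrix (Fin q) (Fin q) ℝ)
        - C * diagonal b * diagonal θ2 * Wᵀ * A⁻¹ * (W * diagonal θ2 * diagonal b * Cᵀ)
      = C * diagonal e * Cᵀ + σf2 • (1 : Matrix (Fin q) (Fin q) ℝ) := by
    rw [hcross, diagonal_mul_diagonal, smul_one_eq_diagonal, diagonal_add, add_sub_right_comm,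
      ← Matrix.sub_mul, ← Matrix.mul_sub, diagonal_sub]
  let := invertibleOfIsUnitDet A hunit
  rw [det_fromBlocks₁₁, invOf_eq_nonsing_inv, hschur, hdetA,
    det_mul_diagonal_mul_transpose_add_smul_one hC e hσf2.ne' (by simpa using hrq.le)]
  simp only [Fintype.card_fin]
  rw [mul_mul_mul_comm, ← Finset.prod_mul_distrib]
  congr 1
  refine Finset.prod_congr rfl fun i _ => ?_
  have := (hpos i).ne'
  simp only [e]
  field_simp
  ring
end

section
/- Let Σ be the PPLS joint covariance matrix, let σ_e > 0 and σ_f > 0 denote the positive square roots of σ_e² and σ_f², and let S be any real symmetric (p+q)×(p+q) matrix with blocks S_xx ∈ ℝ^{p×p}, S_xy = S_yxᵀ ∈ ℝ^{p×q}, S_yy ∈ ℝ^{q×q}. For i = 1,…,r let w_i, c_i be the i-th columns of W, C, set D_i = (σ_f²+σ_h²)(θ_i²+σ_e²) + b_i²θ_i²σ_e², Φ_x(i) = 1 − σ_e²(σ_f²+σ_h²+b_i²θ_i²)/D_i, Φ_y(i) = 1 − σ_f²(σ_e²+θ_i²)/D_i, Φ_xy(i) = σ_e σ_f b_i θ_i²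 / D_i, Q_x(i) = σ_e⁻² · w_iᵀ S_xx w_i, Q_y(i) = σ_f⁻² · c_iᵀ S_yy c_i, Q_xy(i) = 2(σ_e σ_f)⁻¹ · w_iᵀ S_xy c_i. Then tr(S Σ⁻¹) = σ_e⁻²·tr(S_xx) + σ_f⁻²·tr(S_yy) − Σ_{i=1}^r ( Φ_x(i)·Q_x(i) + Φ_y(i)·Q_y(i) + Φ_xy(i)·Q_xy(i) ). -/
open Matrix

theorem trace_fromBlocks_eq_add {m n R : Type*} [Fintype m] [Fintype n] [AddCommMonoid R]
    (A : Matrix m m R) (B : Matrix m n R) (C : Matrix n m R) (D : Matrix n n R) :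
    trace (fromBlocks A B C D) = trace A + trace D := by
  simp [trace, Fintype.sum_sum_type]

section DiagSandwich

variable {l m n k R : Type*} [Fintype k] [DecidableEq k]

/-- The matrix `∑ i, a i • uᵢ vᵢᵀ`, where `uᵢ`, `vᵢ` are the columns of `U`, `V`. -/
def diagSandwich [CommRing R] (U : Matrix m k R) (a : k → R) (V : Matrix n k R) : Matrix m n R :=
  U * diagonal a * Vᵀ

theorem diagSandwich_apply [CommRing R] (U : Matrix m k R) (a : k → R) (V : Matrix n k R)
    (i : m) (j : n) : diagSandwich U a V i j = ∑ t, a t * (U i t * V j t) := by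
  rw [diagSandwich, Matrix.mul_apply]
  simp only [mul_diagonal, transpose_apply]
  exact Finset.sum_congr rfl fun t _ => by ring

theorem diagSandwich_add [CommRing R] (U : Matrix m k R) (a b : k → R) (V : Matrix n k R) :
    diagSandwich U (a + b) V = diagSandwich U a V + diagSandwich U b V := by
  ext i j
  simp only [diagSandwich_apply, Matrix.add_apply, Pi.add_apply, add_mul, Finset.sum_add_distrib]

theorem diagSandwich_smul [CommRing R] (U : Matrix m k R) (s : R) (a : k → R)
    (V : Matrix n k R) : diagSandwich U (s • a) V = s • diagSandwich U a V := by
  ext i j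
  simp only [diagSandwich_apply, Matrix.smul_apply, Pi.smul_apply, smul_eq_mul, mul_assoc,
    Finset.mul_sum]

theorem diagSandwich_zero [CommRing R] (U : Matrix m k R) (V : Matrix n k R) :
    diagSandwich U 0 V = 0 := by
  ext i j
  simp [diagSandwich_apply]

theorem diagSandwich_mul [CommRing R] [Fintype m] (U : Matrix l k R) (a : k → R)
    (V : Matrix m k R) (hV : Vᵀ * V = 1) (b : k → R) (Z : Matrix n k R) :
    diagSandwich U a V * diagSandwich V b Z = diagSandwich U (a * b) Z := by
  have h : diagSandwich U a V * diagSandwich V b Z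
      = U * diagonal a * (Vᵀ * V) * diagonal b * Zᵀ := by
    simp only [diagSandwich, Matrix.mul_assoc]
  rw [h, hV, Matrix.mul_one, Matrix.mul_assoc U, diagonal_mul_diagonal]
  rfl

theorem trace_mul_diagSandwich [CommRing R] [Fintype m] [Fintype n] (M : Matrix n m R)
    (U : Matrix m k R) (a : k → R) (V : Matrix n k R) :
    trace (M * diagSandwich U a V) = ∑ t, a t * ∑ i, ∑ j, V i t * M i j * U j t := by
  simp only [trace, diag_apply, Matrix.mul_apply, diagSandwich_apply, Finset.mul_sum]
  simp_rw [Finset.sum_comm (s := (Finset.univ : Finset m)) (t := (Finset.univ : Finset k))]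
  rw [Finset.sum_comm]
  exact Finset.sum_congr rfl fun t _ => Finset.sum_congr rfl fun i _ =>
    Finset.sum_congr rfl fun j _ => by ring

/-- Inversion of a two-block matrix that acts on each plane spanned by `(uᵢ, 0)` and `(0, vᵢ)`
as `!![a i + s, c i; c i, d i + t]` and as the scalars `s`, `t` on the orthogonal complements. -/
theorem inv_fromBlocks_diagSandwich [Field R] [Fintype m] [Fintype n] [DecidableEq m]
    [DecidableEq n] {U : Matrix m k R} {V : Matrix n k R} (hU : Uᵀ * U = 1) (hV : Vᵀ * V = 1)
    {s t : R} (hs : s ≠ 0) (ht : t ≠ 0) (a c d : k → R)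
    (hdet : ∀ i, (a i + s) * (d i + t) - c i ^ 2 ≠ 0) :
    (fromBlocks (diagSandwich U a U + s • 1) (diagSandwich U c V)
      (diagSandwich V c U) (diagSandwich V d V + t • 1))⁻¹
    = fromBlocks
      (diagSandwich U (fun i => (d i + t) / ((a i + s) * (d i + t) - c i ^ 2) - s⁻¹) U + s⁻¹ • 1)
      (diagSandwich U (fun i => -c i / ((a i + s) * (d i + t) - c i ^ 2)) V)
      (diagSandwich V (fun i => -c i / ((a i + s) * (d i + t) - c i ^ 2)) U)
      (diagSandwich V (fun i => (a i + s) / ((a i + s) * (d i + t) - c i ^ 2) - t⁻¹) V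
        + t⁻¹ • 1) := by
  apply Matrix.inv_eq_right_inv
  rw [fromBlocks_multiply, ← fromBlocks_one]
  set x : k → R := fun i => (d i + t) / ((a i + s) * (d i + t) - c i ^ 2) - s⁻¹ with hx
  set y : k → R := fun i => (a i + s) / ((a i + s) * (d i + t) - c i ^ 2) - t⁻¹ with hy
  set z : k → R := fun i => -c i / ((a i + s) * (d i + t) - c i ^ 2) with hz
  have h₁₁ : a * x + s • x + s⁻¹ • a + c * z = 0 := by
    funext i
    simp only [hx, hz, Pi.add_apply, Pi.mul_apply, Pi.smul_apply, smul_eq_mul, Pi.zero_apply]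
    linear_combination mul_inv_cancel₀ (hdet i) - mul_inv_cancel₀ hs
  have h₁₂ : a * z + s • z + c * y + t⁻¹ • c = 0 := by
    funext i
    have := hdet i
    simp only [hy, hz, Pi.add_apply, Pi.mul_apply, Pi.smul_apply, smul_eq_mul, Pi.zero_apply]
    field_simp
    ring
  have h₂₁ : c * x + s⁻¹ • c + d * z + t • z = 0 := by
    funext i
    have := hdet i
    simp only [hx, hz, Pi.add_apply, Pi.mul_apply, Pi.smul_apply, smul_eq_mul, Pi.zero_apply]
    field_simp
    ring
  have h₂₂ : c * z + d * y + t • y + t⁻¹ • d = 0 := by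
    funext i
    simp only [hy, hz, Pi.add_apply, Pi.mul_apply, Pi.smul_apply, smul_eq_mul, Pi.zero_apply]
    linear_combination mul_inv_cancel₀ (hdet i) - mul_inv_cancel₀ ht
  have e₁₁ := congrArg (diagSandwich U · U) h₁₁
  have e₁₂ := congrArg (diagSandwich U · V) h₁₂
  have e₂₁ := congrArg (diagSandwich V · U) h₂₁
  have e₂₂ := congrArg (diagSandwich V · V) h₂₂
  simp only [diagSandwich_add, diagSandwich_smul, diagSandwich_zero] at e₁₁ e₁₂ e₂₁ e₂₂
  simp only [Matrix.add_mul, Matrix.mul_add, diagSandwich_mul _ _ _ hU,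
    diagSandwich_mul _ _ _ hV, Matrix.smul_mul, Matrix.mul_smul, Matrix.one_mul, Matrix.mul_one]
  congr 1
  · linear_combination (norm := module) e₁₁ + (mul_inv_cancel₀ hs) • (1 : Matrix m m R)
  · linear_combination (norm := module) e₁₂
  · linear_combination (norm := module) e₂₁
  · linear_combination (norm := module) e₂₂ + (mul_inv_cancel₀ ht) • (1 : Matrix n n R)

end DiagSandwich

/-- scalar expansion of `tr(S Σ⁻¹)` for the PPLS joint
covariance `Σ` and an arbitrary symmetric matrix `S`.  Here `σe, σf > 0`
are the positive square roots of the noise variances. -/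
theorem stmt5 (p q r : ℕ) (hr : 1 ≤ r) (hrp : r < p) (hrq : r < q)
    (σe σf : ℝ) (hσe : 0 < σe) (hσf : 0 < σf)
    (σh2 : ℝ) (hσh2 : 0 < σh2)
    (θ2 b : Fin r → ℝ) (hθ2 : ∀ i, 0 < θ2 i) (hb : ∀ i, 0 < b i)
    (W : Matrix (Fin p) (Fin r) ℝ) (C : Matrix (Fin q) (Fin r) ℝ)
    (hW : Wᵀ * W = 1) (hC : Cᵀ * C = 1)
    (Sig : Matrix (Fin p ⊕ Fin q) (Fin p ⊕ Fin q) ℝ)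
    (hSig : Sig = Matrix.fromBlocks
        (W * Matrix.diagonal θ2 * Wᵀ + σe ^ 2 • (1 : Matrix (Fin p) (Fin p) ℝ))
        (W * Matrix.diagonal θ2 * Matrix.diagonal b * Cᵀ)
        (C * Matrix.diagonal b * Matrix.diagonal θ2 * Wᵀ)
        (C * (Matrix.diagonal (fun i => b i ^ 2) * Matrix.diagonal θ2
              + σh2 • (1 : Matrix (Fin r) (Fin r) ℝ)) * Cᵀ
          + σf ^ 2 • (1 : Matrix (Fin q) (Fin q) ℝ)))
    (S : Matrix (Fin p ⊕ Fin q) (Fin p ⊕ Fin q) ℝ) (hS : S.IsSymm)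
    (D Φx Φy Φxy Qx Qy Qxy : Fin r → ℝ)
    (hD : ∀ i, D i = (σf ^ 2 + σh2) * (θ2 i + σe ^ 2) + b i ^ 2 * θ2 i * σe ^ 2)
    (hΦx : ∀ i, Φx i = 1 - σe ^ 2 * (σf ^ 2 + σh2 + b i ^ 2 * θ2 i) / D i)
    (hΦy : ∀ i, Φy i = 1 - σf ^ 2 * (σe ^ 2 + θ2 i) / D i)
    (hΦxy : ∀ i, Φxy i = σe * σf * b i * θ2 i / D i)
    (hQx : ∀ i, Qx i
      = (σe ^ 2)⁻¹ * ∑ j : Fin p, ∑ j' : Fin p, W j i * S.toBlocks₁₁ j j' * W j' i)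
    (hQy : ∀ i, Qy i
      = (σf ^ 2)⁻¹ * ∑ l : Fin q, ∑ l' : Fin q, C l i * S.toBlocks₂₂ l l' * C l' i)
    (hQxy : ∀ i, Qxy i
      = 2 * (σe * σf)⁻¹ * ∑ j : Fin p, ∑ l : Fin q, W j i * S.toBlocks₁₂ j l * C l i) :
    Matrix.trace (S * Sig⁻¹)
      = (σe ^ 2)⁻¹ * Matrix.trace S.toBlocks₁₁ + (σf ^ 2)⁻¹ * Matrix.trace S.toBlocks₂₂
        - ∑ i : Fin r, (Φx i * Qx i + Φy i * Qy i + Φxy i * Qxy i) := by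
  have hdet : ∀ i, (θ2 i + σe ^ 2) * ((b i ^ 2 * θ2 i + σh2) + σf ^ 2) - (θ2 i * b i) ^ 2 = D i :=
    fun i => by rw [hD]; ring
  have hDne : ∀ i, D i ≠ 0 := fun i => by
    have := hθ2 i
    rw [hD]
    positivity
  have hSig' : Sig = fromBlocks (diagSandwich W θ2 W + σe ^ 2 • 1)
      (diagSandwich W (fun i => θ2 i * b i) C) (diagSandwich C (fun i => θ2 i * b i) W)
      (diagSandwich C (fun i => b i ^ 2 * θ2 i + σh2) C + σf ^ 2 • 1) := by
    have hbθ : (fun i => b i * θ2 i) = fun i => θ2 i * b i := funext fun i => mul_comm _ _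
    rw [hSig, smul_one_eq_diagonal σh2, diagonal_mul_diagonal, diagonal_add,
      Matrix.mul_assoc W (diagonal θ2) (diagonal b), Matrix.mul_assoc C (diagonal b),
      diagonal_mul_diagonal, diagonal_mul_diagonal, hbθ]
    rfl
  have hS21 : ∀ l j, S.toBlocks₂₁ l j = S.toBlocks₁₂ j l := fun l j => hS.apply _ _
  rw [hSig', inv_fromBlocks_diagSandwich hW hC (by positivity) (by positivity) _ _ _
    (fun i => (hdet i).symm ▸ hDne i), ← fromBlocks_toBlocks S, fromBlocks_multiply,
    trace_fromBlocks_eq_add]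
  simp only [toBlocks_fromBlocks₁₁, toBlocks_fromBlocks₂₂, hdet,
    Matrix.mul_add, trace_add, trace_mul_diagSandwich, Matrix.mul_smul, Matrix.mul_one,
    trace_smul, smul_eq_mul, hS21]
  have hswap : ∀ i, ∑ l, ∑ j, C l i * S.toBlocks₁₂ j l * W j i
      = ∑ j, ∑ l, W j i * S.toBlocks₁₂ j l * C l i := fun i => by
    rw [Finset.sum_comm]
    exact Finset.sum_congr rfl fun j _ => Finset.sum_congr rfl fun l _ => by ring
  simp only [hswap]
  have hterm : ∀ i, Φx i * Qx i + Φy i * Qy i + Φxy i * Qxy i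
      = -(((b i ^ 2 * θ2 i + σh2 + σf ^ 2) / D i - (σe ^ 2)⁻¹)
          * ∑ j, ∑ j', W j i * S.toBlocks₁₁ j j' * W j' i)
        - ((θ2 i + σe ^ 2) / D i - (σf ^ 2)⁻¹)
          * ∑ l, ∑ l', C l i * S.toBlocks₂₂ l l' * C l' i
        - 2 * (-(θ2 i * b i) / D i * ∑ j, ∑ l, W j i * S.toBlocks₁₂ j l * C l i) := by
    intro i
    have := hDne i
    rw [hΦx, hΦy, hΦxy, hQx, hQy, hQxy]
    field_simp
    ring
  simp only [hterm, Finset.sum_sub_distrib, Finset.sum_neg_distrib, ← Finset.mul_sum]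
  ring
end

section
/- Fix reals σ_e² > 0, σ_f² > 0, σ_h² > 0, b > 0, and Q_x, Q_y, Q_xy ∈ ℝ. Define D(s) = (σ_f²+σ_h²)(s+σ_e²) + b² s σ_e², N(s) = (σ_f²+σ_h²) s Q_x + σ_h²(s+σ_e²) Q_y + b² s σ_e² Q_y + b s Q_xy, and ℓ(s) = log D(s) − N(s)/D(s) on the set {s ∈ ℝ : D(s) > 0}. Set d = (σ_f²+σ_h²) + b²σ_e², n = (σ_f²+σ_h²)Q_x + (σ_h²+b²σ_e²)Q_y + b Q_xy, and s* = σ_e² · ( (n−d)(σ_f²+σ_h²) − d σ_h² Q_y ) / d². Then ℓ is differentiable at every s with D(s) > 0, and for such s the derivative ℓ'(s) equals 0 if and only if s = s*. -/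
/-- `D(s) = (σ_f²+σ_h²)(s+σ_e²) + b² s σ_e²`. -/
noncomputable def Dfun (σe2 σf2 σh2 b : ℝ) (s : ℝ) : ℝ :=
  (σf2 + σh2) * (s + σe2) + b ^ 2 * s * σe2

/-- `N(s) = (σ_f²+σ_h²) s Q_x + σ_h²(s+σ_e²) Q_y + b² s σ_e² Q_y + b s Q_xy`. -/
noncomputable def Nfun (σe2 σf2 σh2 b Qx Qy Qxy : ℝ) (s : ℝ) : ℝ :=
  (σf2 + σh2) * s * Qx + σh2 * (s + σe2) * Qy + b ^ 2 * s * σe2 * Qy + b * s * Qxy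

/-- `ℓ(s) = log D(s) − N(s)/D(s)`. -/
noncomputable def ellfun (σe2 σf2 σh2 b Qx Qy Qxy : ℝ) (s : ℝ) : ℝ :=
  Real.log (Dfun σe2 σf2 σh2 b s) - Nfun σe2 σf2 σh2 b Qx Qy Qxy s / Dfun σe2 σf2 σh2 b s

theorem hasDerivAt_Dfun (σe2 σf2 σh2 b s : ℝ) :
    HasDerivAt (Dfun σe2 σf2 σh2 b) ((σf2 + σh2) + b ^ 2 * σe2) s := by
  have h := ((hasDerivAt_id s).const_mul ((σf2 + σh2) + b ^ 2 * σe2)).add_const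
    ((σf2 + σh2) * σe2)
  rw [mul_one] at h
  refine h.congr_of_eventuallyEq (.of_forall fun x => ?_)
  simp only [Dfun, id]
  ring

theorem hasDerivAt_Nfun (σe2 σf2 σh2 b Qx Qy Qxy s : ℝ) :
    HasDerivAt (Nfun σe2 σf2 σh2 b Qx Qy Qxy)
      ((σf2 + σh2) * Qx + (σh2 + b ^ 2 * σe2) * Qy + b * Qxy) s := by
  have h := ((hasDerivAt_id s).const_mul
    ((σf2 + σh2) * Qx + (σh2 + b ^ 2 * σe2) * Qy + b * Qxy)).add_const (σh2 * σe2 * Qy)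
  rw [mul_one] at h
  refine h.congr_of_eventuallyEq (.of_forall fun x => ?_)
  simp only [Nfun, id]
  ring

/-- The numerator of `ℓ'` over the common denominator `D ^ 2` is affine in `s`. -/
theorem hasDerivAt_ellfun (σe2 σf2 σh2 b Qx Qy Qxy s : ℝ) (hD : Dfun σe2 σf2 σh2 b s ≠ 0) :
    HasDerivAt (ellfun σe2 σf2 σh2 b Qx Qy Qxy)
      ((s * ((σf2 + σh2) + b ^ 2 * σe2) ^ 2
        - σe2 * ((((σf2 + σh2) * Qx + (σh2 + b ^ 2 * σe2) * Qy + b * Qxy)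
                - ((σf2 + σh2) + b ^ 2 * σe2)) * (σf2 + σh2)
              - ((σf2 + σh2) + b ^ 2 * σe2) * σh2 * Qy))
        / Dfun σe2 σf2 σh2 b s ^ 2) s := by
  have hD' := hasDerivAt_Dfun σe2 σf2 σh2 b s
  refine ((hD'.log hD).sub
    ((hasDerivAt_Nfun σe2 σf2 σh2 b Qx Qy Qxy s).div hD' hD)).congr_deriv ?_
  rw [div_sub_div _ _ hD (pow_ne_zero 2 hD),
    div_eq_div_iff (mul_ne_zero hD (pow_ne_zero 2 hD)) (pow_ne_zero 2 hD)]
  simp only [Dfun, Nfun]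
  ring

/-- on `{s : D(s) > 0}`, `ℓ` is differentiable, and its
derivative vanishes exactly at the closed-form stationary point
`s* = σ_e²·((n−d)(σ_f²+σ_h²) − d σ_h² Q_y)/d²`. -/
theorem stmt11 (σe2 σf2 σh2 b Qx Qy Qxy : ℝ)
    (hσe2 : 0 < σe2) (hσf2 : 0 < σf2) (hσh2 : 0 < σh2) (hb : 0 < b) :
    ∀ s : ℝ, 0 < Dfun σe2 σf2 σh2 b s →
      DifferentiableAt ℝ (ellfun σe2 σf2 σh2 b Qx Qy Qxy) s ∧
      (deriv (ellfun σe2 σf2 σh2 b Qx Qy Qxy) s = 0 ↔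
        s = σe2 * ((((σf2 + σh2) * Qx + (σh2 + b ^ 2 * σe2) * Qy + b * Qxy)
                - ((σf2 + σh2) + b ^ 2 * σe2)) * (σf2 + σh2)
              - ((σf2 + σh2) + b ^ 2 * σe2) * σh2 * Qy)
            / ((σf2 + σh2) + b ^ 2 * σe2) ^ 2) := by
  intro s hD
  have h := hasDerivAt_ellfun σe2 σf2 σh2 b Qx Qy Qxy s hD.ne'
  have hd : ((σf2 + σh2) + b ^ 2 * σe2) ^ 2 ≠ 0 := by positivity
  refine ⟨h.differentiableAt, ?_⟩
  rw [h.deriv, div_eq_zero_iff, or_iff_left (pow_ne_zero 2 hD.ne'), sub_eq_zero, eq_div_iff hd]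
end

section
/- Fix reals σ_e² > 0, σ_f² > 0, σ_h² > 0, s > 0, and Q_x, Q_y, Q_xy ∈ ℝ. Define D(b) = (σ_f²+σ_h²)(s+σ_e²) + b² s σ_e², N(b) = (σ_f²+σ_h²) s Q_x + σ_h²(s+σ_e²) Q_y + b² s σ_e² Q_y + b s Q_xy, and ℓ(b) = log D(b) − N(b)/D(b) for b ∈ ℝ (note D(b) > 0 for all b). Set R = (σ_f²+σ_h²)·[(s+σ_e²)(1−Q_y) + s Q_x] + σ_h²(s+σ_e²) Q_y, and coefficients c_3 = 2 σ_e⁴ s, c_2 = σ_e² s Q_xy, c_1 = 2 σ_e² R, c_0 = −Q_xy (σ_f²+σ_h²)(s+σ_e²). Then ℓ is differentiable on ℝ and, for every b ∈ ℝ, ℓ'(b) = 0 if and only if c_3 b³ + c_2 b² + c_1 b + c_0 = 0. -/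
/-- `D(b) = (σ_f²+σ_h²)(s+σ_e²) + b² s σ_e²` as a function of `b`. -/
noncomputable def Db (σe2 σf2 σh2 s : ℝ) (b : ℝ) : ℝ :=
  (σf2 + σh2) * (s + σe2) + b ^ 2 * s * σe2

/-- `N(b) = (σ_f²+σ_h²) s Q_x + σ_h²(s+σ_e²) Q_y + b² s σ_e² Q_y + b s Q_xy`
as a function of `b`. -/
noncomputable def Nb (σe2 σf2 σh2 s Qx Qy Qxy : ℝ) (b : ℝ) : ℝ :=
  (σf2 + σh2) * s * Qx + σh2 * (s + σe2) * Qy + b ^ 2 * s * σe2 * Qy + b * s * Qxy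

/-- `ℓ(b) = log D(b) − N(b)/D(b)`. -/
noncomputable def ellb (σe2 σf2 σh2 s Qx Qy Qxy : ℝ) (b : ℝ) : ℝ :=
  Real.log (Db σe2 σf2 σh2 s b) - Nb σe2 σf2 σh2 s Qx Qy Qxy b / Db σe2 σf2 σh2 s b

theorem Db_pos {σe2 σf2 σh2 s : ℝ} (hσe2 : 0 < σe2) (hσf2 : 0 < σf2) (hσh2 : 0 < σh2)
    (hs : 0 < s) (b : ℝ) : 0 < Db σe2 σf2 σh2 s b := by
  unfold Db
  positivity

theorem hasDerivAt_Db (σe2 σf2 σh2 s b : ℝ) :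
    HasDerivAt (Db σe2 σf2 σh2 s) (2 * b * s * σe2) b := by
  have h := (((hasDerivAt_pow 2 b).mul_const s).mul_const σe2).const_add
    ((σf2 + σh2) * (s + σe2))
  exact h.congr_deriv (by norm_num)

theorem hasDerivAt_Nb (σe2 σf2 σh2 s Qx Qy Qxy b : ℝ) :
    HasDerivAt (Nb σe2 σf2 σh2 s Qx Qy Qxy) (2 * b * s * σe2 * Qy + s * Qxy) b := by
  have h := (((((hasDerivAt_pow 2 b).mul_const s).mul_const σe2).mul_const Qy).const_add
    ((σf2 + σh2) * s * Qx + σh2 * (s + σe2) * Qy)).add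
    (((hasDerivAt_id b).mul_const s).mul_const Qxy)
  exact h.congr_deriv (by norm_num)

/-- The derivative of `ℓ` is the cubic score polynomial times the positive factor `s / D²`. -/
theorem hasDerivAt_ellb {σe2 σf2 σh2 s : ℝ} (Qx Qy Qxy : ℝ) {b : ℝ}
    (hD : Db σe2 σf2 σh2 s b ≠ 0) :
    HasDerivAt (ellb σe2 σf2 σh2 s Qx Qy Qxy)
      (s / Db σe2 σf2 σh2 s b ^ 2 *
        (2 * σe2 ^ 2 * s * b ^ 3 + σe2 * s * Qxy * b ^ 2
          + 2 * σe2 * ((σf2 + σh2) * ((s + σe2) * (1 - Qy) + s * Qx)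
              + σh2 * (s + σe2) * Qy) * b
          + (-(Qxy * (σf2 + σh2) * (s + σe2))))) b := by
  have hD' := hasDerivAt_Db σe2 σf2 σh2 s b
  have h := (hD'.log hD).sub ((hasDerivAt_Nb σe2 σf2 σh2 s Qx Qy Qxy b).div hD' hD)
  refine h.congr_deriv ?_
  field_simp
  unfold Db Nb
  ring

/-- `ℓ` is differentiable on `ℝ` and `ℓ'(b) = 0` iff
`c₃b³ + c₂b² + c₁b + c₀ = 0` with `c₃ = 2σ_e⁴s`, `c₂ = σ_e² s Q_xy`,
`c₁ = 2σ_e² R`, `c₀ = −Q_xy(σ_f²+σ_h²)(s+σ_e²)`. -/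
theorem stmt12 (σe2 σf2 σh2 s Qx Qy Qxy : ℝ)
    (hσe2 : 0 < σe2) (hσf2 : 0 < σf2) (hσh2 : 0 < σh2) (hs : 0 < s) :
    Differentiable ℝ (ellb σe2 σf2 σh2 s Qx Qy Qxy) ∧
    ∀ b : ℝ,
      (deriv (ellb σe2 σf2 σh2 s Qx Qy Qxy) b = 0 ↔
        2 * σe2 ^ 2 * s * b ^ 3 + σe2 * s * Qxy * b ^ 2
          + 2 * σe2 * ((σf2 + σh2) * ((s + σe2) * (1 - Qy) + s * Qx)
              + σh2 * (s + σe2) * Qy) * b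
          + (-(Qxy * (σf2 + σh2) * (s + σe2))) = 0) := by
  have hD := Db_pos hσe2 hσf2 hσh2 hs
  have hderiv := fun b => hasDerivAt_ellb Qx Qy Qxy (hD b).ne'
  refine ⟨fun b => (hderiv b).differentiableAt, fun b => ?_⟩
  rw [(hderiv b).deriv, mul_eq_zero_iff_left (div_pos hs (pow_pos (hD b) 2)).ne']
end
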